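/- Let n ≥ 1 and let f be a continuous map from the unit n-sphere S^n ⊆ ℝ^{n+1} to ℝ^n. Then there exists a point x ∈ S^n such that f(x) = f(-x). -/

import Mathlib

/-!
Suppose odd continuous functions `g₁, …, g_n` on `S^n` have no common zero. Label each point by the
signs `t₁, …, t_n ∈ ℤ/2` of the `g_i`, breaking ties antipodally; by compactness no set of small
diameter meets both labels of every `t_i`, so the cochain `δt₁ ∪ ⋯ ∪ δt_n` vanishes on all small
simplices. On the other hand, sweeping the equator along meridians builds by recursion hemispheres
`z_k` of `S^k` made of small simplices, with `∂z_{k+1} = z_k + ν z_k` for the antipodal map `ν`.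
Since `t(νx) = t(x) + 1` and `w = δt₂ ∪ ⋯ ∪ δt_{k+1}` is a `ν`-invariant cocycle, Stokes' formula
gives `⟨δt₁ ∪ w, z_{k+1}⟩ = ⟨t₁ ∪ w, z_k + ν z_k⟩ = ⟨w, z_k⟩`, and descending to the point `z₀`
shows that all these numbers are `1`.
-/

namespace BorsukUlam

open Finsupp Metric Module
open Real (cos sin pi)

section Chains

variable {R X Y : Type*} [CommRing R]

variable (R X) in
/-- Augmented ordered simplicial chains on the full simplex with vertex set `X`: the list
`[x₀, …, x_k]` is a `k`-simplex, repetitions being allowed, and `[]` is the empty simplex. -/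
abbrev Chain := List X →₀ R

/-- The join of a chain with the vertex `a`, placed in front. -/
noncomputable def cone (a : X) : Chain R X →ₗ[R] Chain R X := lmapDomain R R (List.cons a)

/-- The push-forward of chains along a map of vertices. -/
noncomputable def push (φ : X → Y) : Chain R X →ₗ[R] Chain R Y := lmapDomain R R (List.map φ)

variable (R) in
/-- The boundary of a single simplex, the alternating sum of its facets. -/
noncomputable def simplexBoundary : List X → Chain R X
  | [] => 0
  | a :: l => single l 1 - cone a (simplexBoundary l)

lemma simplexBoundary_cons (a : X) (l : List X) :
    simplexBoundary R (a :: l) = single l 1 - cone a (simplexBoundary R l) :=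
  rfl

/-- The augmented simplicial boundary operator. -/
noncomputable def boundary : Chain R X →ₗ[R] Chain R X := linearCombination R (simplexBoundary R)

variable (R) in
/-- The triangulated prism over a single simplex: for `l = [x₀, …, x_k]` it is the alternating sum
of the simplices `[φ x₀, …, φ x_i, ψ x_i, …, ψ x_k]`. -/
noncomputable def simplexPrism (φ ψ : X → Y) : List X → Chain R Y
  | [] => 0
  | a :: l => single (φ a :: ψ a :: l.map ψ) 1 - cone (φ a) (simplexPrism φ ψ l)

/-- The prism operator, a chain homotopy between `push φ` and `push ψ`. -/
noncomputable def prism (φ ψ : X → Y) : Chain R X →ₗ[R] Chain R Y :=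
  linearCombination R (simplexPrism R φ ψ)

lemma eq_of_forall_simplex {M : Type*} [AddCommGroup M] [Module R M] {f g : Chain R X →ₗ[R] M}
    (h : ∀ l, f (single l 1) = g (single l 1)) (z : Chain R X) : f z = g z :=
  LinearMap.congr_fun (lhom_ext' fun l ↦ LinearMap.ext_ring (h l)) z

@[simp]
lemma cone_single (a : X) (l : List X) (r : R) : cone a (single l r) = single (a :: l) r :=
  mapDomain_single

@[simp]
lemma push_single (φ : X → Y) (l : List X) (r : R) : push φ (single l r) = single (l.map φ) r :=
  mapDomain_single

@[simp]
lemma boundary_single (l : List X) (r : R) : boundary (single l r) = r • simplexBoundary R l :=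
  linearCombination_single R r l

@[simp]
lemma prism_single (φ ψ : X → Y) (l : List X) (r : R) :
    prism φ ψ (single l r) = r • simplexPrism R φ ψ l :=
  linearCombination_single R r l

lemma push_push {Z : Type*} (φ : X → Y) (ψ : Y → Z) (z : Chain R X) :
    push ψ (push φ z) = push (ψ ∘ φ) z :=
  eq_of_forall_simplex (f := push ψ ∘ₗ push φ) (by simp) z

lemma push_id (z : Chain R X) : push id z = z :=
  eq_of_forall_simplex (g := .id) (by simp) z

lemma push_cone (φ : X → Y) (a : X) (z : Chain R X) :
    push φ (cone a z) = cone (φ a) (push φ z) :=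
  eq_of_forall_simplex (f := push φ ∘ₗ cone a) (g := cone (φ a) ∘ₗ push φ) (by simp) z

lemma boundary_cone (a : X) (z : Chain R X) : boundary (cone a z) = z - cone a (boundary z) :=
  eq_of_forall_simplex (f := boundary ∘ₗ cone a) (g := .id - cone a ∘ₗ boundary)
    (by simp [simplexBoundary]) z

lemma prism_cone (φ ψ : X → Y) (a : X) (z : Chain R X) :
    prism φ ψ (cone a z) = cone (φ a) (cone (ψ a) (push ψ z)) - cone (φ a) (prism φ ψ z) :=
  eq_of_forall_simplex (f := prism φ ψ ∘ₗ cone a)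
    (g := cone (φ a) ∘ₗ cone (ψ a) ∘ₗ push ψ - cone (φ a) ∘ₗ prism φ ψ)
    (by simp [simplexPrism]) z

lemma boundary_boundary (z : Chain R X) : boundary (boundary z) = 0 := by
  refine eq_of_forall_simplex (f := boundary ∘ₗ boundary) (g := 0) (fun l ↦ ?_) z
  induction l with
  | nil => simp [simplexBoundary]
  | cons a l ih =>
    rw [LinearMap.comp_apply, LinearMap.zero_apply] at ih ⊢
    rw [← cone_single, boundary_cone, map_sub, boundary_cone, ih, map_zero, sub_zero, sub_self]

lemma boundary_push (φ : X → Y) (z : Chain R X) : boundary (push φ z) = push φ (boundary z) := by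
  refine eq_of_forall_simplex (f := boundary ∘ₗ push φ) (g := push φ ∘ₗ boundary) (fun l ↦ ?_) z
  induction l with
  | nil => simp [simplexBoundary]
  | cons a l ih =>
    rw [LinearMap.comp_apply, LinearMap.comp_apply] at ih ⊢
    rw [← cone_single, push_cone, boundary_cone, boundary_cone, map_sub, push_cone, ih]

lemma boundary_prism (φ ψ : X → Y) (z : Chain R X) :
    boundary (prism φ ψ z) = push ψ z - push φ z - prism φ ψ (boundary z) := by
  refine eq_of_forall_simplex (f := boundary ∘ₗ prism φ ψ)
    (g := push ψ - push φ - prism φ ψ ∘ₗ boundary) (fun l ↦ ?_) z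
  induction l with
  | nil => simp [simplexBoundary, simplexPrism]
  | cons a l ih =>
    simp only [LinearMap.comp_apply, LinearMap.sub_apply] at ih ⊢
    rw [← cone_single]
    simp only [prism_cone, boundary_cone, push_cone, boundary_push, map_sub, ih]
    abel

end Chains

section Mesh

variable {R X Y : Type*} [CommRing R]

variable (R X) in
/-- The chains all of whose simplices have diameter at most `r`. -/
def chainsOfMesh [PseudoMetricSpace X] (r : ℝ) : Submodule R (Chain R X) :=
  supported R R {l | ∀ x ∈ l, ∀ y ∈ l, dist x y ≤ r}

lemma map_mem_of_mem_supported {M : Type*} [AddCommGroup M] [Module R M] {s : Set (List X)}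
    {f : Chain R X →ₗ[R] M} {S : Submodule R M} (h : ∀ l ∈ s, f (single l 1) ∈ S) {z : Chain R X}
    (hz : z ∈ supported R R s) : f z ∈ S := by
  suffices supported R R s ≤ S.comap f from this hz
  rw [supported_eq_span_single, Submodule.span_le]
  rintro _ ⟨l, hl, rfl⟩
  exact h l hl

lemma simplexPrism_mem_supported (φ ψ : X → Y) (l : List X) :
    simplexPrism R φ ψ l ∈ supported R R {l' | l' ⊆ l.map φ ++ l.map ψ} := by
  induction l with
  | nil => exact zero_mem _
  | cons a l ih =>
    refine sub_mem (single_mem_supported R 1 ?_) (map_mem_of_mem_supported (fun l' hl' ↦ ?_) ih)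
    · simp
    · rw [cone_single]
      refine single_mem_supported R 1 (List.cons_subset.2 ⟨by simp, fun x hx ↦ ?_⟩)
      have := hl' hx
      simp only [List.map_cons, List.mem_append, List.mem_cons] at this ⊢
      tauto

variable [PseudoMetricSpace X] [PseudoMetricSpace Y]

lemma push_mem_chainsOfMesh {φ : X → Y} (hφ : LipschitzWith 1 φ) {r : ℝ} {z : Chain R X}
    (hz : z ∈ chainsOfMesh R X r) : push φ z ∈ chainsOfMesh R Y r := by
  refine map_mem_of_mem_supported (fun l hl ↦ ?_) hz
  rw [push_single]
  refine single_mem_supported R 1 ?_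
  simpa using fun x hx y hy ↦ (hφ.dist_le_mul x y).trans (by simpa using hl x hx y hy)

lemma prism_mem_chainsOfMesh {φ ψ : X → Y} (hφ : LipschitzWith 1 φ) (hψ : LipschitzWith 1 ψ)
    {η : ℝ} (hη : ∀ x, dist (φ x) (ψ x) ≤ η) {r : ℝ} {z : Chain R X}
    (hz : z ∈ chainsOfMesh R X r) : prism φ ψ z ∈ chainsOfMesh R Y (r + η) := by
  have dist_same {χ : X → Y} (hχ : LipschitzWith 1 χ) {x y : X} (hxy : dist x y ≤ r) :
      dist (χ x) (χ y) ≤ r :=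
    (hχ.dist_le_mul x y).trans (by simpa using hxy)
  have dist_cross {x y : X} (hxy : dist x y ≤ r) : dist (φ x) (ψ y) ≤ r + η :=
    (dist_triangle _ (φ y) _).trans (add_le_add (dist_same hφ hxy) (hη y))
  refine map_mem_of_mem_supported (fun l hl ↦ ?_) hz
  rw [prism_single, one_smul]
  refine supported_mono (fun l' hl' x hx y hy ↦ ?_) (simplexPrism_mem_supported φ ψ l)
  have hx := hl' hx
  have hy := hl' hy
  simp only [List.mem_append, List.mem_map] at hx hy
  obtain ⟨v, hv, rfl⟩ | ⟨v, hv, rfl⟩ := hx <;> obtain ⟨w, hw, rfl⟩ | ⟨w, hw, rfl⟩ := hy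
  · linarith [dist_same hφ (hl v hv w hw), dist_nonneg.trans (hη v)]
  · exact dist_cross (hl v hv w hw)
  · rw [dist_comm]
    exact dist_cross (hl w hw v hv)
  · linarith [dist_same hψ (hl v hv w hw), dist_nonneg.trans (hη v)]

lemma exists_boundary_eq_push_sub_push {φ : ℕ → X → Y} (hφ : ∀ j, LipschitzWith 1 (φ j)) {η : ℝ}
    (hη : ∀ j x, dist (φ j x) (φ (j + 1) x) ≤ η) {r : ℝ} {c : Chain R X}
    (hc : c ∈ chainsOfMesh R X r) (hdc : boundary c = 0) (N : ℕ) :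
    ∃ b ∈ chainsOfMesh R Y (r + η), boundary b = push (φ N) c - push (φ 0) c := by
  refine ⟨∑ j ∈ Finset.range N, prism (φ j) (φ (j + 1)) c,
    sum_mem fun j _ ↦ prism_mem_chainsOfMesh (hφ j) (hφ (j + 1)) (hη j) hc, ?_⟩
  simp only [map_sum, boundary_prism, hdc, map_zero, sub_zero]
  exact Finset.sum_range_sub (fun j ↦ push (φ j) c) N

lemma exists_boundary_eq_of_homotopy {H : ℝ → X → Y} (hH : ∀ θ, LipschitzWith 1 (H θ))
    {K : NNReal} (hK : ∀ x, LipschitzWith K (H · x)) (T : ℝ) {η : ℝ} (hη : 0 < η) {r : ℝ}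
    {c : Chain R X} (hc : c ∈ chainsOfMesh R X r) (hdc : boundary c = 0) :
    ∃ b ∈ chainsOfMesh R Y (r + η), boundary b = push (H T) c - push (H 0) c := by
  obtain ⟨N, hN⟩ := exists_nat_gt (K * |T| / η)
  have hN0 : (0 : ℝ) < N := lt_of_le_of_lt (by positivity) hN
  have hstep (j : ℕ) (x : X) : dist (H (j * (T / N)) x) (H ((j + 1 : ℕ) * (T / N)) x) ≤ η := calc
    _ ≤ K * dist (j * (T / N)) ((j + 1 : ℕ) * (T / N)) := (hK x).dist_le_mul _ _
    _ = K * |T| / N := by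
      rw [dist_comm, Real.dist_eq, ← sub_mul, Nat.cast_succ, add_sub_cancel_left, one_mul, abs_div,
        Nat.abs_cast, mul_div_assoc]
    _ ≤ η := by
      rw [div_le_iff₀ hN0, mul_comm η]
      exact ((div_lt_iff₀ hη).1 hN).le
  have := exists_boundary_eq_push_sub_push (φ := fun j : ℕ ↦ H (j * (T / N)))
    (fun j ↦ hH _) hstep hc hdc N
  rwa [mul_div_cancel₀ T hN0.ne', Nat.cast_zero, zero_mul] at this

end Mesh

section Cochains

variable {R X Y : Type*} [CommRing R]

/-- A cochain, that is a function on simplices, which vanishes on boundaries. -/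
def IsCocycle (w : List X → R) : Prop := ∀ z, linearCombination R w (boundary z) = 0

/-- The cup product `t ∪ w` of a `0`-cochain `t` with a cochain `w`. -/
def cup (t : X → R) (w : List X → R) : List X → R
  | [] => 0
  | x :: l => t x * w (x :: l)

/-- The cup product `δt ∪ w` of the coboundary of a `0`-cochain `t` with a cochain `w`. -/
def coboundaryCup (t : X → R) (w : List X → R) : List X → R
  | x :: y :: l => (t y - t x) * w (y :: l)
  | _ => 0

/-- The cochain `δt₁ ∪ ⋯ ∪ δt_k` attached to a list of `0`-cochains `t₁, …, t_k`. For `k = 0` it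
is the unit cochain, which is `1` on vertices. -/
def iteratedCup : List (X → R) → List X → R
  | [], [_] => 1
  | [], _ => 0
  | t :: ts, l => coboundaryCup t (iteratedCup ts) l

@[simp]
lemma iteratedCup_nil_right (ts : List (X → R)) : iteratedCup ts [] = 0 := by
  cases ts <;> rfl

lemma linearCombination_cup_cone (t : X → R) (w : List X → R) (a : X) (z : Chain R X) :
    linearCombination R (cup t w) (cone a z) = t a * linearCombination R w (cone a z) :=
  eq_of_forall_simplex (f := linearCombination R (cup t w) ∘ₗ cone a)
    (g := t a • linearCombination R w ∘ₗ cone a) (by simp [cup]) z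

lemma IsCocycle.linearCombination_cup_boundary {w : List X → R} (hw : IsCocycle w) (t : X → R)
    (z : Chain R X) :
    linearCombination R (cup t w) (boundary z) = linearCombination R (coboundaryCup t w) z := by
  refine eq_of_forall_simplex (f := linearCombination R (cup t w) ∘ₗ boundary) (fun l ↦ ?_) z
  match l with
  | [] => simp [simplexBoundary, coboundaryCup]
  | [x] => simp [simplexBoundary, coboundaryCup, cup]
  | x :: y :: l =>
    have hwl : w (y :: l) = linearCombination R w (cone x (simplexBoundary R (y :: l))) := by
      simpa [sub_eq_zero, simplexBoundary_cons x] using hw (single (x :: y :: l) 1)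
    simp only [LinearMap.comp_apply, boundary_single, one_smul, simplexBoundary_cons x, map_sub,
      linearCombination_single, linearCombination_cup_cone, ← hwl, cup, coboundaryCup]
    ring

lemma IsCocycle.coboundaryCup {w : List X → R} (hw : IsCocycle w) (t : X → R) :
    IsCocycle (coboundaryCup t w) := fun z ↦ by
  rw [← hw.linearCombination_cup_boundary, boundary_boundary, map_zero]

lemma cone_apply_nil (a : X) (z : Chain R X) : cone a z [] = 0 :=
  mapDomain_of_notMem_range _ _ (by simp)

lemma linearCombination_iteratedCup_nil (z : Chain R X) :
    linearCombination R (iteratedCup []) z = boundary z [] := by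
  refine eq_of_forall_simplex (g := lapply [] ∘ₗ boundary) (fun l ↦ ?_) z
  match l with
  | [] => simp [simplexBoundary]
  | [x] => simp [simplexBoundary, iteratedCup]
  | x :: y :: l => simp [simplexBoundary_cons x, iteratedCup, cone_apply_nil]

lemma isCocycle_iteratedCup (ts : List (X → R)) : IsCocycle (iteratedCup ts) := by
  induction ts with
  | nil => exact fun z ↦ by simp [linearCombination_iteratedCup_nil, boundary_boundary]
  | cons t ts ih => exact ih.coboundaryCup t

lemma exists_ne_of_iteratedCup_ne_zero {ts : List (X → R)} {l : List X}
    (h : iteratedCup ts l ≠ 0) : ∀ t ∈ ts, ∃ x ∈ l, ∃ y ∈ l, t x ≠ t y := by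
  induction ts generalizing l with
  | nil => simp
  | cons t ts ih =>
    match l with
    | [] | [x] => simp [iteratedCup, coboundaryCup] at h
    | x :: y :: l =>
      rw [iteratedCup, coboundaryCup] at h
      refine List.forall_mem_cons.2 ⟨⟨y, by simp, x, by simp, ?_⟩, fun s hs ↦ ?_⟩
      · exact sub_ne_zero.1 (left_ne_zero_of_mul h)
      · obtain ⟨a, ha, b, hb, hab⟩ := ih (right_ne_zero_of_mul h) s hs
        exact ⟨a, List.mem_cons_of_mem _ ha, b, List.mem_cons_of_mem _ hb, hab⟩

lemma iteratedCup_map (φ : X → Y) (ts : List (Y → R)) (l : List X) :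
    iteratedCup ts (l.map φ) = iteratedCup (ts.map (· ∘ φ)) l := by
  induction ts generalizing l with
  | nil => rcases l with _ | ⟨x, _ | ⟨y, l⟩⟩ <;> rfl
  | cons t ts ih =>
    rcases l with _ | ⟨x, _ | ⟨y, l⟩⟩
    · rfl
    · rfl
    · simp [iteratedCup, coboundaryCup, ← ih]

lemma linearCombination_iteratedCup_push (φ : X → Y) (ts : List (Y → R)) (z : Chain R X) :
    linearCombination R (iteratedCup ts) (push φ z) =
      linearCombination R (iteratedCup (ts.map (· ∘ φ))) z :=
  eq_of_forall_simplex (f := linearCombination R (iteratedCup ts) ∘ₗ push φ)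
    (by simp [iteratedCup_map]) z

end Cochains

section Antipodal

variable {X : Type*} [InvolutiveNeg X]

/-- A mod 2 labelling which takes different values at antipodal points. -/
def IsAntipodal (t : X → ZMod 2) : Prop := ∀ x, t (-x) = t x + 1

lemma iteratedCup_map_neg {ts : List (X → ZMod 2)} (hts : ∀ t ∈ ts, IsAntipodal t) (l : List X) :
    iteratedCup ts (l.map Neg.neg) = iteratedCup ts l := by
  induction ts generalizing l with
  | nil => rcases l with _ | ⟨x, _ | ⟨y, l⟩⟩ <;> rfl
  | cons t ts ih =>
    obtain ⟨ht, hts⟩ := List.forall_mem_cons.1 hts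
    rcases l with _ | ⟨x, _ | ⟨y, l⟩⟩
    · rfl
    · rfl
    · have := ih hts (y :: l)
      simp only [List.map_cons] at this
      simp only [iteratedCup, coboundaryCup, List.map_cons, this, ht x, ht y,
        add_sub_add_right_eq_sub]

lemma cup_add_cup_map_neg {t : X → ZMod 2} (ht : IsAntipodal t) {ts : List (X → ZMod 2)}
    (hts : ∀ t ∈ ts, IsAntipodal t) (l : List X) :
    cup t (iteratedCup ts) l + cup t (iteratedCup ts) (l.map Neg.neg) = iteratedCup ts l := by
  cases l with
  | nil => simp [cup]
  | cons x l =>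
    have := iteratedCup_map_neg hts (x :: l)
    simp only [List.map_cons] at this
    simp only [cup, List.map_cons, this, ht x]
    rw [add_mul, ← add_assoc, CharTwo.add_self_eq_zero, zero_add, one_mul]

lemma linearCombination_iteratedCup_cons {t : X → ZMod 2} (ht : IsAntipodal t)
    {ts : List (X → ZMod 2)} (hts : ∀ t ∈ ts, IsAntipodal t) {z b : Chain (ZMod 2) X}
    (hb : boundary b = z + push Neg.neg z) :
    linearCombination (ZMod 2) (iteratedCup (t :: ts)) b =
      linearCombination (ZMod 2) (iteratedCup ts) z := by
  set A := linearCombination (ZMod 2) (cup t (iteratedCup ts))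
  calc linearCombination (ZMod 2) (iteratedCup (t :: ts)) b
    _ = A (boundary b) := ((isCocycle_iteratedCup ts).linearCombination_cup_boundary t b).symm
    _ = A z + A (push Neg.neg z) := by rw [hb, map_add]
    _ = linearCombination (ZMod 2) (iteratedCup ts) z :=
      eq_of_forall_simplex (f := A + A ∘ₗ push Neg.neg)
        (fun l ↦ by simpa [A] using cup_add_cup_map_neg ht hts l) z

lemma add_push_neg_symm (z : Chain (ZMod 2) X) :
    z + push Neg.neg z + push Neg.neg (z + push Neg.neg z) = 0 := by
  rw [map_add, push_push, show (Neg.neg ∘ Neg.neg : X → X) = id from funext neg_neg, push_id,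
    add_comm (push _ _), ZModModule.add_self]

open Classical in
lemma exists_isAntipodal_of_odd (hX : ∀ x : X, x ≠ -x) {g : X → ℝ} (hg : g.Odd) :
    ∃ t : X → ZMod 2, IsAntipodal t ∧ ∀ x y, t x ≠ t y → g x * g y ≤ 0 := by
  -- The zeros of `g` are labelled by means of a well-order on `X`.
  let pos (x : X) : Prop := 0 < g x ∨ g x = 0 ∧ WellOrderingRel x (-x)
  have pos_neg (x : X) : pos (-x) ↔ ¬pos x := by
    simp only [pos, hg x, neg_neg, neg_eq_zero, Left.neg_pos_iff]
    rcases lt_trichotomy (g x) 0 with h | h | h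
    · simp [h, h.le.not_gt, h.ne]
    · have hasymm : WellOrderingRel (-x) x → ¬WellOrderingRel x (-x) := asymm
      have htotal := trichotomous_of WellOrderingRel x (-x)
      simp only [h, lt_irrefl, false_or, true_and, hX x] at htotal ⊢
      tauto
    · simp [h, h.le.not_gt, h.ne']
  have nonneg {x : X} (hx : pos x) : 0 ≤ g x := hx.elim le_of_lt fun h ↦ h.1.ge
  have nonpos {x : X} (hx : ¬pos x) : g x ≤ 0 := le_of_not_gt fun h ↦ hx (.inl h)
  refine ⟨fun x ↦ if pos x then 1 else 0, fun x ↦ ?_, fun x y hxy ↦ ?_⟩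
  · by_cases hx : pos x <;> simp [pos_neg, hx, CharTwo.add_self_eq_zero]
  · by_cases hx : pos x <;> by_cases hy : pos y
    · simp [hx, hy] at hxy
    · exact mul_nonpos_of_nonneg_of_nonpos (nonneg hx) (nonpos hy)
    · exact mul_nonpos_of_nonpos_of_nonneg (nonpos hx) (nonneg hy)
    · simp [hx, hy] at hxy

end Antipodal

section Sphere

variable {V : Type*} [NormedAddCommGroup V] [InnerProductSpace ℝ V]

lemma norm_cos_smul_add_sin_smul {x e : V} (hx : ‖x‖ = 1) (he : ‖e‖ = 1) (hxe : inner ℝ x e = 0)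
    (θ : ℝ) : ‖cos θ • x + sin θ • e‖ = 1 := by
  rw [← sq_eq_sq₀ (norm_nonneg _) zero_le_one, norm_add_sq_real]
  simp [norm_smul, inner_smul_left, inner_smul_right, hx, he, hxe]

/-- The point at angle `θ` on the meridian from the point `x` of the equator orthogonal to the
pole `e` towards `e`. -/
noncomputable def meridian (e : sphere (0 : V) 1) (θ : ℝ)
    (x : sphere (0 : (ℝ ∙ (e : V))ᗮ) 1) : sphere (0 : V) 1 :=
  ⟨cos θ • (x.1 : V) + sin θ • (e : V), by
    have hx : ‖(x.1 : V)‖ = 1 := norm_eq_of_mem_sphere x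
    have hxe := Submodule.mem_orthogonal_singleton_iff_inner_left.1 x.1.2
    exact mem_sphere_zero_iff_norm.2
      (norm_cos_smul_add_sin_smul hx (norm_eq_of_mem_sphere e) hxe θ)⟩

lemma meridian_zero_neg (e : sphere (0 : V) 1) (x : sphere (0 : (ℝ ∙ (e : V))ᗮ) 1) :
    meridian e 0 (-x) = -meridian e 0 x :=
  Subtype.ext (by simp [meridian])

lemma meridian_pi_div_two (e : sphere (0 : V) 1) (x : sphere (0 : (ℝ ∙ (e : V))ᗮ) 1) :
    meridian e (pi / 2) x = e :=
  Subtype.ext (by simp [meridian])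

lemma lipschitzWith_meridian (e : sphere (0 : V) 1) (θ : ℝ) : LipschitzWith 1 (meridian e θ) := by
  refine LipschitzWith.of_dist_le_mul fun x y ↦ ?_
  rw [Subtype.dist_eq, meridian, meridian, dist_add_right, dist_smul₀]
  exact mul_le_mul_of_nonneg_right (Real.abs_cos_le_one θ) dist_nonneg

lemma lipschitzWith_meridian_angle (e : sphere (0 : V) 1) (x : sphere (0 : (ℝ ∙ (e : V))ᗮ) 1) :
    LipschitzWith 2 (meridian e · x) := by
  refine LipschitzWith.of_dist_le_mul fun α β ↦ ?_
  have hx : ‖(x.1 : V)‖ = 1 := norm_eq_of_mem_sphere x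
  calc dist (meridian e α x) (meridian e β x)
    _ ≤ dist (cos α • (x.1 : V)) (cos β • (x.1 : V)) +
        dist (sin α • (e : V)) (sin β • (e : V)) := dist_add_add_le _ _ _ _
    _ = |cos α - cos β| + |sin α - sin β| := by
      simp only [dist_eq_norm, ← sub_smul, norm_smul, Real.norm_eq_abs, hx,
        norm_eq_of_mem_sphere, mul_one]
    _ ≤ |α - β| + |α - β| :=
      add_le_add (Real.abs_cos_sub_cos_le α β) (Real.abs_sin_sub_sin_le α β)
    _ = (2 : NNReal) * dist α β := (two_mul _).symm

/-- If `z` is a hemisphere of the equator, then `z + push Neg.neg z` is the whole equator, and the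
meridians sweep out a hemisphere bounded by it. -/
lemma exists_hemisphere (e : sphere (0 : V) 1) {r η : ℝ} (hη : 0 < η)
    {z : Chain (ZMod 2) (sphere (0 : (ℝ ∙ (e : V))ᗮ) 1)} (hz : z ∈ chainsOfMesh (ZMod 2) _ r)
    (hdz : boundary (z + push Neg.neg z) = 0) :
    ∃ b ∈ chainsOfMesh (ZMod 2) (sphere (0 : V) 1) (r + η),
      boundary b = push (meridian e 0) z + push Neg.neg (push (meridian e 0) z) := by
  have hneg : LipschitzWith 1 (Neg.neg : sphere (0 : (ℝ ∙ (e : V))ᗮ) 1 → _) :=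
    .of_dist_le_mul fun x y ↦ by simp [Subtype.dist_eq]
  obtain ⟨b, hb, hdb⟩ := exists_boundary_eq_of_homotopy (lipschitzWith_meridian e)
    (lipschitzWith_meridian_angle e) (pi / 2) hη
    (add_mem hz (push_mem_chainsOfMesh hneg hz)) hdz
  have hpole : push (meridian e (pi / 2)) (z + push Neg.neg z) = 0 := by
    rw [map_add, push_push,
      show meridian e (pi / 2) ∘ Neg.neg = meridian e (pi / 2) from
        funext fun x ↦ by simp only [Function.comp_apply, meridian_pi_div_two],
      ZModModule.add_self]
  have hequator : push (meridian e 0) (push Neg.neg z) =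
      push Neg.neg (push (meridian e 0) z) := by
    rw [push_push, push_push]
    exact congrArg (push · z) (funext (meridian_zero_neg e))
  exact ⟨b, hb, by rw [hdb, hpole, map_add, hequator, ZModModule.sub_eq_add, zero_add]⟩

lemma lt_finrank_orthogonal_span_singleton {n : ℕ} (hn : n + 1 < finrank ℝ V)
    (e : sphere (0 : V) 1) : n < finrank ℝ (ℝ ∙ (e : V))ᗮ := by
  obtain ⟨m, hm⟩ := Nat.exists_eq_add_one_of_ne_zero (Nat.ne_zero_of_lt hn)
  have : Fact (finrank ℝ V = m + 1) := ⟨hm⟩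
  rw [Submodule.finrank_orthogonal_span_singleton (n := m) (ne_zero_of_mem_unit_sphere e)]
  lia

lemma nonempty_sphere_of_finrank_pos (hV : 0 < finrank ℝ V) : Nonempty (sphere (0 : V) 1) :=
  have := nontrivial_of_finrank_pos hV
  (NormedSpace.sphere_nonempty.2 zero_le_one).to_subtype

theorem exists_chain_iteratedCup_eq_one {ts : List (sphere (0 : V) 1 → ZMod 2)}
    (hts : ∀ t ∈ ts, IsAntipodal t) (hV : ts.length < finrank ℝ V) {δ : ℝ} (hδ : 0 < δ) :
    ∃ z ∈ chainsOfMesh (ZMod 2) (sphere (0 : V) 1) δ, boundary (z + push Neg.neg z) = 0 ∧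
      linearCombination (ZMod 2) (iteratedCup ts) z = 1 := by
  induction hk : ts.length generalizing V δ with
  | zero =>
    obtain rfl := List.length_eq_zero_iff.1 hk
    obtain ⟨e⟩ := nonempty_sphere_of_finrank_pos hV
    refine ⟨single [e] 1, single_mem_supported _ _ ?_, ?_, ?_⟩
    · simp only [Set.mem_ofPred_eq, List.forall_mem_singleton, dist_self, hδ.le]
    · simp [simplexBoundary, ZModModule.add_self]
    · simp [iteratedCup]
  | succ n ih =>
    obtain ⟨e⟩ := nonempty_sphere_of_finrank_pos (pos_of_gt hV)
    obtain ⟨t, ts, rfl⟩ := List.exists_cons_of_length_eq_add_one hk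
    obtain ⟨ht, hts⟩ := List.forall_mem_cons.1 hts
    rw [List.length_cons, Nat.add_right_cancel_iff] at hk
    have hts' : ∀ t ∈ ts.map (· ∘ meridian e 0), IsAntipodal t := List.forall_mem_map.2
      fun t ht x ↦ by rw [Function.comp_apply, meridian_zero_neg, hts t ht, Function.comp_apply]
    have hlength : (ts.map (· ∘ meridian e 0)).length = n := by rw [List.length_map, hk]
    obtain ⟨z, hz, hdz, hzts⟩ := ih hts'
      (hlength ▸ lt_finrank_orthogonal_span_singleton (hk ▸ hV) e) (half_pos hδ) hlength
    obtain ⟨b, hb, hdb⟩ := exists_hemisphere e (half_pos hδ) hz hdz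
    refine ⟨b, add_halves δ ▸ hb, ?_, ?_⟩
    · rw [map_add, boundary_push, hdb, add_push_neg_symm]
    · rw [linearCombination_iteratedCup_cons ht hts hdb, linearCombination_iteratedCup_push, hzts]

/-- A discrete Borsuk–Ulam theorem, in the spirit of Tucker's lemma. -/
theorem exists_forall_exists_dist_le_and_ne {ts : List (sphere (0 : V) 1 → ZMod 2)}
    (hts : ∀ t ∈ ts, IsAntipodal t) (hV : ts.length < finrank ℝ V) {δ : ℝ} (hδ : 0 < δ) :
    ∃ x, ∀ t ∈ ts, ∃ y, dist x y ≤ δ ∧ t x ≠ t y := by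
  obtain ⟨z, hz, -, hzts⟩ := exists_chain_iteratedCup_eq_one hts hV hδ
  have hne : z.sum (fun l r ↦ r • iteratedCup ts l) ≠ 0 := by
    rw [← linearCombination_apply, hzts]
    exact one_ne_zero
  obtain ⟨l, hl, hlts⟩ := Finset.exists_ne_zero_of_sum_ne_zero hne
  have hlts : iteratedCup ts l ≠ 0 := right_ne_zero_of_smul hlts
  obtain ⟨x, hx⟩ := List.exists_mem_of_ne_nil l (by rintro rfl; simp at hlts)
  refine ⟨x, fun t ht ↦ ?_⟩
  obtain ⟨a, ha, b, hb, hab⟩ := exists_ne_of_iteratedCup_ne_zero hlts t ht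
  by_cases hxa : t x = t a
  · exact ⟨b, hz hl x hx b hb, hxa ▸ hab⟩
  · exact ⟨a, hz hl x hx a ha, hxa⟩

lemma exists_forall_abs_lt_of_odd {ι : Type*} [Fintype ι] (hV : Fintype.card ι < finrank ℝ V)
    {g : ι → sphere (0 : V) 1 → ℝ} (hg : ∀ i, UniformContinuous (g i)) (hodd : ∀ i, (g i).Odd)
    {ε : ℝ} (hε : 0 < ε) : ∃ x, ∀ i, |g i x| < ε := by
  choose t ht htg using fun i ↦ exists_isAntipodal_of_odd (ne_neg_of_mem_unit_sphere ℝ) (hodd i)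
  obtain ⟨δ, hδ, hgδ⟩ := Metric.uniformContinuous_iff.1 (uniformContinuous_pi.2 hg) ε hε
  obtain ⟨x, hx⟩ := exists_forall_exists_dist_le_and_ne (ts := Finset.univ.toList.map t)
    (by simpa using ht) (by simpa using hV) (half_pos hδ)
  refine ⟨x, fun i ↦ ?_⟩
  obtain ⟨y, hxy, hne⟩ := hx (t i) (by simp)
  have hsign : g i x * g i y ≤ 0 := htg i x y hne
  have hdist : |g i x - g i y| < ε :=
    (dist_le_pi_dist _ _ i).trans_lt (hgδ (hxy.trans_lt (half_lt_self hδ)))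
  have hle : |g i x| ≤ |g i x - g i y| := sq_le_sq.1 (by nlinarith [sq_nonneg (g i y)])
  exact hle.trans_lt hdist

theorem exists_forall_eq_zero_of_odd {ι : Type*} [Fintype ι] (hV : Fintype.card ι < finrank ℝ V)
    {g : ι → sphere (0 : V) 1 → ℝ} (hg : ∀ i, Continuous (g i)) (hodd : ∀ i, (g i).Odd) :
    ∃ x, ∀ i, g i x = 0 := by
  have := FiniteDimensional.of_finrank_pos (pos_of_gt hV)
  have := FiniteDimensional.proper_real V
  have hclosed : IsClosed (Set.range fun x i ↦ g i x) :=
    (isCompact_range (continuous_pi hg)).isClosed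
  have hzero : (0 : ι → ℝ) ∈ closure (Set.range fun x i ↦ g i x) := by
    refine Metric.mem_closure_range_iff.2 fun ε hε ↦ ?_
    obtain ⟨x, hx⟩ := exists_forall_abs_lt_of_odd hV
      (fun i ↦ CompactSpace.uniformContinuous_of_continuous (hg i)) hodd hε
    exact ⟨x, (dist_pi_lt_iff hε).2 fun i ↦ by simpa [Real.dist_eq] using hx i⟩
  obtain ⟨x, hx⟩ := hclosed.closure_subset hzero
  exact ⟨x, congrFun hx⟩

end Sphere

end BorsukUlam

theorem borsuk_ulam_general {V F : Type*} [NormedAddCommGroup V] [InnerProductSpace ℝ V]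
    [AddCommGroup F] [Module ℝ F] [TopologicalSpace F] [IsTopologicalAddGroup F]
    [ContinuousSMul ℝ F] [T2Space F] [FiniteDimensional ℝ F]
    (hFV : Module.finrank ℝ F < Module.finrank ℝ V) {f : Metric.sphere (0 : V) 1 → F}
    (hf : Continuous f) : ∃ x, f x = f (-x) := by
  let b := Module.finBasis ℝ F
  obtain ⟨x, hx⟩ := BorsukUlam.exists_forall_eq_zero_of_odd (V := V)
    (g := fun i x ↦ b.coord i (f x - f (-x))) (by rwa [Fintype.card_fin])
    (fun i ↦ (b.coord i).continuous_of_finiteDimensional.comp (hf.sub (hf.comp continuous_neg)))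
    (fun i x ↦ by simp only [neg_neg, ← map_neg, neg_sub])
  exact ⟨x, sub_eq_zero.1 (b.forall_coord_eq_zero_iff.1 hx)⟩

/-- **Borsuk–Ulam Theorem.** For `n ≥ 1` and a continuous map `f` from the unit
`n`-sphere `S^n ⊆ ℝ^{n+1}` into `ℝ^n`, there exists `x ∈ S^n` with `f x = f (-x)`. -/
theorem borsuk_ulam (n : ℕ) (hn : 1 ≤ n)
    (f : EuclideanSpace ℝ (Fin (n + 1)) → EuclideanSpace ℝ (Fin n))
    (hf : ContinuousOn f (Metric.sphere (0 : EuclideanSpace ℝ (Fin (n + 1))) 1)) :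
    ∃ x ∈ Metric.sphere (0 : EuclideanSpace ℝ (Fin (n + 1))) 1, f x = f (-x) := by
  obtain ⟨x, hx⟩ := borsuk_ulam_general (by simp) (continuousOn_iff_continuous_domRestrict.1 hf)
  exact ⟨x, x.2, hx⟩
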